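/- Fix 0 < α < 1 and let r(z) = (−z)^{−α} for z < 0. Set b̃ = min{ −(2α²)^{1/(2(α+1))}, −(2α³/(1−α))^{1/(2(α+1))} }. Then for every z < b̃ one has 0 < r'(z) ≤ 1/√2 and r(z)·r''(z) > 2·r'(z)²·(r'(z)²+1). -/

import Mathlib

/-!
For `r(z) = (−z)^{−α}` one has `α·r·r'' = (α + 1)·r'²`. Dividing by `r'²`, the convexity condition
`r·r'' > 2·r'²·(r'² + 1)` becomes `r'² < (1 − α)/(2α)`, while the slope condition `r' ≤ 1/√2` is
`r'² ≤ 1/2`. Since `r'² = α²/(−z)^{2(α+1)}`, a bound `r'² < b` is the same as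
`z < −(α²/b)^{1/(2(α+1))}`; the two terms of the minimum `b̃` are these thresholds for `b = 1/2`
and `b = (1 − α)/(2α)`.
-/

section NegRpow

variable {α z : ℝ}

/- At a singularity `w = 0` both sides take the junk value `0`; this makes the formula an equality
of functions, which can be differentiated again. -/
lemma deriv_neg_rpow_neg (α : ℝ) :
    deriv (fun w : ℝ ↦ (-w) ^ (-α)) = fun w ↦ α * (-w) ^ (-(α + 1)) := by
  ext w
  rw [deriv_comp_neg (fun x : ℝ ↦ x ^ (-α)), Real.deriv_rpow_const, neg_add']
  ring

lemma deriv_deriv_neg_rpow_neg (α : ℝ) :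
    deriv (deriv fun w : ℝ ↦ (-w) ^ (-α)) = fun w ↦ α * (α + 1) * (-w) ^ (-(α + 2)) := by
  ext w
  rw [deriv_neg_rpow_neg, deriv_const_mul_field, deriv_neg_rpow_neg]
  ring_nf

lemma deriv_neg_rpow_neg_pos (hα : 0 < α) (hz : z < 0) :
    0 < deriv (fun w : ℝ ↦ (-w) ^ (-α)) z := by
  rw [deriv_neg_rpow_neg]
  exact mul_pos hα (Real.rpow_pos_of_pos (neg_pos.2 hz) _)

lemma sq_deriv_neg_rpow_neg (α : ℝ) (hz : z < 0) :
    (deriv (fun w : ℝ ↦ (-w) ^ (-α)) z) ^ 2 = α ^ 2 / (-z) ^ (2 * (α + 1)) := by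
  have hz' : 0 ≤ -z := neg_nonneg.2 hz.le
  rw [deriv_neg_rpow_neg, mul_pow, ← Real.rpow_mul_natCast hz', div_eq_mul_inv,
    ← Real.rpow_neg hz']
  push_cast
  ring_nf

lemma mul_neg_rpow_neg_mul_deriv_deriv (α : ℝ) (hz : z < 0) :
    α * ((-z) ^ (-α) * deriv (deriv fun w : ℝ ↦ (-w) ^ (-α)) z) =
      (α + 1) * (deriv (fun w : ℝ ↦ (-w) ^ (-α)) z) ^ 2 := by
  have hpow : (-z) ^ (-α) * (-z) ^ (-(α + 2)) = ((-z) ^ (-(α + 1))) ^ 2 := by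
    rw [sq, ← Real.rpow_add (neg_pos.2 hz), ← Real.rpow_add (neg_pos.2 hz)]
    ring_nf
  rw [deriv_deriv_neg_rpow_neg, deriv_neg_rpow_neg]
  linear_combination α ^ 2 * (α + 1) * hpow

lemma sq_deriv_neg_rpow_neg_lt_iff {b : ℝ} (hα : -1 < α) (hb : 0 < b) (hz : z < 0) :
    (deriv (fun w : ℝ ↦ (-w) ^ (-α)) z) ^ 2 < b ↔
      z < -((α ^ 2 / b) ^ (1 / (2 * (α + 1)))) := by
  have hz' : 0 < -z := neg_pos.2 hz
  rw [sq_deriv_neg_rpow_neg α hz, div_lt_comm₀ (Real.rpow_pos_of_pos hz' _) hb, lt_neg, one_div,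
    Real.rpow_inv_lt_iff_of_pos (by positivity) hz'.le (by linarith)]

lemma two_mul_sq_deriv_lt_neg_rpow_neg_mul_deriv_deriv_iff (hα : 0 < α) (hz : z < 0) :
    2 * (deriv (fun w : ℝ ↦ (-w) ^ (-α)) z) ^ 2 *
        ((deriv (fun w : ℝ ↦ (-w) ^ (-α)) z) ^ 2 + 1) <
      (-z) ^ (-α) * deriv (deriv fun w : ℝ ↦ (-w) ^ (-α)) z ↔
    (deriv (fun w : ℝ ↦ (-w) ^ (-α)) z) ^ 2 < (1 - α) / (2 * α) := by
  have hsq := sq_pos_of_pos (deriv_neg_rpow_neg_pos hα hz)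
  rw [← mul_lt_mul_iff_right₀ hα, mul_neg_rpow_neg_mul_deriv_deriv α hz]
  generalize (deriv (fun w : ℝ ↦ (-w) ^ (-α)) z) ^ 2 = s at hsq ⊢
  calc α * (2 * s * (s + 1)) < (α + 1) * s
      ↔ (2 * α * (s + 1)) * s < (α + 1) * s := by ring_nf
    _ ↔ 2 * α * (s + 1) < α + 1 := mul_lt_mul_iff_left₀ hsq
    _ ↔ s * (2 * α) < 1 - α := by constructor <;> intro h <;> linarith
    _ ↔ s < (1 - α) / (2 * α) := (lt_div_iff₀ (by positivity)).symm

end NegRpow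

/-- For `0 < α < 1`, `r(z) = (−z)^{−α}` on `(−∞,0)` and
`b̃ = min{ −(2α²)^{1/(2(α+1))}, −(2α³/(1−α))^{1/(2(α+1))} }`, every `z < b̃` satisfies
the conditions of Setting RS: `0 < r'(z) ≤ 1/√2` and
`r(z)·r''(z) > 2·r'(z)²·(r'(z)²+1)`. -/
theorem settingRS_of_rpow (α : ℝ) (hα0 : 0 < α) (hα1 : α < 1) :
    let r : ℝ → ℝ := fun z => (-z) ^ (-α)
    let btilde : ℝ := min (-((2 * α ^ 2) ^ (1 / (2 * (α + 1)))))
                          (-((2 * α ^ 3 / (1 - α)) ^ (1 / (2 * (α + 1)))))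
    ∀ z < btilde,
      (0 < deriv r z ∧ deriv r z ≤ 1 / Real.sqrt 2) ∧
      r z * deriv (deriv r) z > 2 * (deriv r z) ^ 2 * ((deriv r z) ^ 2 + 1) := by
  intro r btilde z hz
  obtain ⟨hz_slope, hz_convex⟩ := lt_min_iff.1 hz
  have hα : -1 < α := by linarith
  have hα1' : 0 < 1 - α := sub_pos.2 hα1
  have hz0 : z < 0 := hz_slope.trans_le (neg_nonpos.2 (by positivity))
  have slope_threshold : 2 * α ^ 2 = α ^ 2 / (1 / 2) := by ring
  have convex_threshold : 2 * α ^ 3 / (1 - α) = α ^ 2 / ((1 - α) / (2 * α)) := by field_simp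
  rw [slope_threshold, ← sq_deriv_neg_rpow_neg_lt_iff hα (by positivity) hz0] at hz_slope
  rw [convex_threshold, ← sq_deriv_neg_rpow_neg_lt_iff hα (by positivity) hz0] at hz_convex
  refine ⟨⟨deriv_neg_rpow_neg_pos hα0 hz0, ?_⟩,
    (two_mul_sq_deriv_lt_neg_rpow_neg_mul_deriv_deriv_iff hα0 hz0).2 hz_convex⟩
  calc deriv r z ≤ √(1 / 2) := Real.le_sqrt_of_sq_le hz_slope.le
    _ = 1 / √2 := by rw [one_div, Real.sqrt_inv, one_div]
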